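/- Ground states of the octagon-square lattice on the cylinder: for all integers M ≥ 2 and L ≥ 1, the hard-core fermion model on the cylindrical octagon-square lattice O^cyl_{M,L} (periodic in the direction of M squares, open in the direction of L squares) has exactly 2^L zero-energy ground states, i.e. dim ker H = 2^L. -/

import Mathlib

/-! ### The supersymmetric hard-core fermion model on a graph

For a finite simple graph `G` with totally ordered vertex set, the Hilbert space has an
orthonormal basis `{|I⟩ : I an independent set of G}`, the supercharge acts by
`Q|I⟩ = Σ_v ε(v,I) |I ∪ {v}⟩` (sum over `v ∉ I` with `I ∪ {v}` independent,
`ε(v,I) = (−1)^{#{w ∈ I : w < v}}`), and the Hamiltonian is `H = Q Q† + Q† Q`. -/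

open scoped BigOperators

/-- A finite set of vertices is independent if it contains no edge of `G`. -/
def Indep {V : Type*} (G : SimpleGraph V) (I : Finset V) : Prop :=
  ∀ ⦃a⦄, a ∈ I → ∀ ⦃b⦄, b ∈ I → ¬ G.Adj a b

lemma Indep.mono {V : Type*} {G : SimpleGraph V} {I J : Finset V}
    (hI : Indep G I) (hJI : J ⊆ I) : Indep G J :=
  fun _ ha _ hb => hI (hJI ha) (hJI hb)

/-- The independent sets of `G`, indexing the orthonormal basis of the Hilbert space. -/
def IndepSet {V : Type*} (G : SimpleGraph V) : Type _ := {I : Finset V // Indep G I}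

noncomputable instance {V : Type*} [Fintype V] [LinearOrder V] (G : SimpleGraph V) :
    Fintype (IndepSet G) := by
  classical exact Subtype.fintype _

instance {V : Type*} [LinearOrder V] (G : SimpleGraph V) : DecidableEq (IndepSet G) := by
  unfold IndepSet; infer_instance

/-- The Hilbert space `ℋ_G` of the hard-core fermion model: one orthonormal basis state
`|I⟩` for every independent set `I` of `G`. -/
noncomputable abbrev FockSpace {V : Type*} [Fintype V] [LinearOrder V] (G : SimpleGraph V) :=
  EuclideanSpace ℂ (IndepSet G)

/-- The fermionic sign `ε(v, I) = (−1)^{#{w ∈ I : w < v}}`. -/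
def fsign {V : Type*} [LinearOrder V] (I : Finset V) (v : V) : ℂ :=
  (-1) ^ (I.filter (· < v)).card

/-- The supercharge `Q`, with `Q|I⟩ = Σ_v ε(v,I) |I ∪ {v}⟩` over vertices `v ∉ I` such that
`I ∪ {v}` is independent; equivalently `(Qψ)(J) = Σ_{v ∈ J} ε(v, J∖{v}) ψ(J∖{v})`. -/
noncomputable def supercharge {V : Type*} [Fintype V] [LinearOrder V] (G : SimpleGraph V) :
    FockSpace G →ₗ[ℂ] FockSpace G where
  toFun ψ := WithLp.toLp 2 fun J => ∑ v ∈ J.1, fsign (J.1.erase v) v *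
      ψ ⟨J.1.erase v, J.2.mono (Finset.erase_subset v J.1)⟩
  map_add' ψ φ := by
    ext J
    change ∑ v ∈ J.1, fsign (J.1.erase v) v *
      (ψ ⟨J.1.erase v, J.2.mono (Finset.erase_subset v J.1)⟩ +
        φ ⟨J.1.erase v, J.2.mono (Finset.erase_subset v J.1)⟩) = _
    simp [mul_add, Finset.sum_add_distrib]
  map_smul' c ψ := by
    ext J
    change ∑ v ∈ J.1, fsign (J.1.erase v) v *
      (c * ψ ⟨J.1.erase v, J.2.mono (Finset.erase_subset v J.1)⟩) = _
    simp [Finset.mul_sum, mul_left_comm]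

/-- The Hamiltonian `H = Q Q† + Q† Q` of the supersymmetric hard-core fermion model. -/
noncomputable def hamiltonian {V : Type*} [Fintype V] [LinearOrder V] (G : SimpleGraph V) :
    FockSpace G →ₗ[ℂ] FockSpace G :=
  supercharge G ∘ₗ LinearMap.adjoint (supercharge G)
    + LinearMap.adjoint (supercharge G) ∘ₗ supercharge G

/-- The fermion-number operator `F`, with `F|I⟩ = |I| · |I⟩`. -/
noncomputable def numberOp {V : Type*} [Fintype V] [LinearOrder V] (G : SimpleGraph V) :
    FockSpace G →ₗ[ℂ] FockSpace G where
  toFun ψ := WithLp.toLp 2 fun I => (I.1.card : ℂ) * ψ I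
  map_add' ψ φ := by ext I; simp [mul_add]
  map_smul' c ψ := by ext I; simp [mul_left_comm]

/-- The bosonic subspace: the span of the basis states `|I⟩` with `|I|` even. -/
noncomputable def bosonic {V : Type*} [Fintype V] [LinearOrder V] (G : SimpleGraph V) :
    Submodule ℂ (FockSpace G) :=
  Submodule.span ℂ
    {e : FockSpace G | ∃ I : IndepSet G, Even I.1.card ∧ e = EuclideanSpace.single I 1}

/-- The fermionic subspace: the span of the basis states `|I⟩` with `|I|` odd. -/
noncomputable def fermionic {V : Type*} [Fintype V] [LinearOrder V] (G : SimpleGraph V) :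
    Submodule ℂ (FockSpace G) :=
  Submodule.span ℂ
    {e : FockSpace G | ∃ I : IndepSet G, Odd I.1.card ∧ e = EuclideanSpace.single I 1}

/-! ### The octagon-square (4-8) lattice on the cylinder -/

/-- Directed edge relation of the cylindrical octagon-square lattice with `M × L` square
plaquettes: square-plaquette edges, horizontal linking edges `(i,j,1)-(i+1,j,3)` with the
first coordinate periodic, and vertical linking edges `(i,j,2)-(i,j+1,0)` with no vertical
wrap-around. -/
def octCylE (M L : ℕ) [NeZero M] (a b : Fin M × Fin L × Fin 4) : Prop :=
  (a.1 = b.1 ∧ a.2.1 = b.2.1 ∧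
    ((a.2.2 = 0 ∧ b.2.2 = 1) ∨ (a.2.2 = 1 ∧ b.2.2 = 2) ∨
     (a.2.2 = 2 ∧ b.2.2 = 3) ∨ (a.2.2 = 3 ∧ b.2.2 = 0))) ∨
  (b.1 = a.1 + 1 ∧ a.2.1 = b.2.1 ∧ a.2.2 = 1 ∧ b.2.2 = 3) ∨
  (a.1 = b.1 ∧ (b.2.1 : ℕ) = (a.2.1 : ℕ) + 1 ∧ a.2.2 = 2 ∧ b.2.2 = 0)

/-- The cylindrical octagon-square lattice `O^cyl_{M,L}`: periodic in the direction of `M`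
squares, open in the direction of `L` squares. -/
def octCylinder (M L : ℕ) [NeZero M] : SimpleGraph (Fin M × Fin L × Fin 4) where
  Adj a b := a ≠ b ∧ (octCylE M L a b ∨ octCylE M L b a)
  symm := by
    refine ⟨?_⟩
    rintro a b ⟨hne, h⟩
    exact ⟨hne.symm, by tauto⟩
  loopless := ⟨fun a h => h.1 rfl⟩

/-!
By Hodge theory the zero-energy states represent the cohomology of the independence complex of the
graph, so their number is at most its total Betti number and at least the absolute value of its
Euler characteristic. In the top row every vertex `(i, j, 2)` has its neighbours among those of
`(i, j, 0)`, so all the vertices `(i, j, 0)` can be removed without changing either invariant. What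
remains of this row is a cycle of length `3 * M`, now disconnected from the rows below, whose
independence complex is homotopy equivalent to a wedge of two `(M - 1)`-spheres. Hence each row
doubles both the bound on the total Betti number and the absolute value of the Euler characteristic,
and after `L` rows the two bounds meet at `2 ^ L`.
-/

open Finset Module

section LinearAlgebra

theorem finrank_span_basis_image {ι K E : Type*} [Finite ι] [Field K] [AddCommGroup E] [Module K E]
    (b : Basis ι K E) (s : Set ι) :
    finrank K (Submodule.span K (b '' s)) = s.ncard := by
  classical
  have := Fintype.ofFinite ι
  rw [finrank_span_set_eq_card (b.linearIndependent.linearIndepOn s).id_image,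
    ← Set.ncard_eq_toFinset_card', Set.ncard_image_of_injective _ b.injective]

variable {K E F : Type*} [Field K] [AddCommGroup E] [Module K E] [FiniteDimensional K E]
  [AddCommGroup F] [Module K F]

theorem finrank_map_add_finrank_inf_ker (f : E →ₗ[K] F) (p : Submodule K E) :
    finrank K (p.map f) + finrank K ↥(p ⊓ LinearMap.ker f) = finrank K p := by
  have hker : finrank K (LinearMap.ker (f.domRestrict p)) = finrank K ↥(p ⊓ LinearMap.ker f) := by
    rw [← Submodule.map_comap_subtype, Submodule.finrank_map_subtype_eq]
    rfl
  rw [← LinearMap.range_domRestrict, ← hker, LinearMap.finrank_range_add_finrank_ker]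

theorem finrank_le_of_map_le_of_disjoint_ker [FiniteDimensional K F] {f : E →ₗ[K] F}
    {p : Submodule K E} {q : Submodule K F} (hmap : p.map f ≤ q)
    (hker : Disjoint p (LinearMap.ker f)) : finrank K p ≤ finrank K q := by
  rw [← finrank_map_add_finrank_inf_ker f p, hker.eq_bot, finrank_bot, add_zero]
  exact Submodule.finrank_mono hmap

theorem finrank_le_finrank_ker_of_map_le {Q : E →ₗ[K] E} (hQ : Q ∘ₗ Q = 0) {p q : Submodule K E}
    (hpq : Disjoint p q) (hmap : p.map Q ≤ q) : finrank K p ≤ finrank K (LinearMap.ker Q) := by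
  have hmap_ker : p.map Q ≤ LinearMap.ker Q :=
    LinearMap.map_le_range.trans (LinearMap.range_le_ker_iff.2 hQ)
  have hdisj : Disjoint (p.map Q) (p ⊓ LinearMap.ker Q) :=
    (hpq.mono inf_le_left hmap).symm
  calc finrank K p = finrank K (p.map Q) + finrank K ↥(p ⊓ LinearMap.ker Q) :=
        (finrank_map_add_finrank_inf_ker Q p).symm
    _ ≤ finrank K ↥(p.map Q ⊔ p ⊓ LinearMap.ker Q) := by
        rw [← Submodule.finrank_sup_add_finrank_inf_eq, hdisj.eq_bot, finrank_bot, add_zero]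
    _ ≤ finrank K (LinearMap.ker Q) := Submodule.finrank_mono (sup_le hmap_ker inf_le_right)

end LinearAlgebra

section Laplacian

variable {𝕜 E : Type*} [RCLike 𝕜] [NormedAddCommGroup E] [InnerProductSpace 𝕜 E]
  [FiniteDimensional 𝕜 E] {Q : E →ₗ[𝕜] E}

theorem ker_comp_adjoint_add_adjoint_comp :
    LinearMap.ker (Q ∘ₗ LinearMap.adjoint Q + LinearMap.adjoint Q ∘ₗ Q) =
      LinearMap.ker Q ⊓ (LinearMap.range Q)ᗮ := by
  ext ψ
  rw [LinearMap.orthogonal_range, Submodule.mem_inf]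
  simp only [LinearMap.mem_ker, LinearMap.add_apply, LinearMap.comp_apply]
  constructor
  · intro h
    have hinner : ‖LinearMap.adjoint Q ψ‖ ^ 2 + ‖Q ψ‖ ^ 2 = 0 := by
      have h' := congrArg (fun φ => RCLike.re (inner 𝕜 ψ φ)) h
      rwa [inner_add_right, ← LinearMap.adjoint_inner_left Q,
        LinearMap.adjoint_inner_right Q ψ (Q ψ), map_add, inner_self_eq_norm_sq,
        inner_self_eq_norm_sq, inner_zero_right, map_zero] at h'
    rw [add_eq_zero_iff_of_nonneg (sq_nonneg _) (sq_nonneg _)] at hinner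
    simpa [and_comm] using hinner
  · rintro ⟨hQ, hQ'⟩
    rw [hQ, hQ', map_zero, map_zero, add_zero]

theorem finrank_ker_laplacian_add_finrank (hQ : Q ∘ₗ Q = 0) :
    finrank 𝕜 (LinearMap.ker (Q ∘ₗ LinearMap.adjoint Q + LinearMap.adjoint Q ∘ₗ Q)) +
      finrank 𝕜 E = 2 * finrank 𝕜 (LinearMap.ker Q) := by
  have hsplit := Submodule.finrank_add_inf_finrank_orthogonal (LinearMap.range_le_ker_iff.2 hQ)
  have hrank := LinearMap.finrank_range_add_finrank_ker Q
  rw [ker_comp_adjoint_add_adjoint_comp, inf_comm]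
  omega

end Laplacian

section Coboundary

variable {V : Type*} [LinearOrder V]

theorem fsign_mul_self (I : Finset V) (v : V) : fsign I v * fsign I v = 1 := by
  simp [fsign, ← mul_pow]

theorem fsign_ne_zero (I : Finset V) (v : V) : fsign I v ≠ 0 := by
  simp [fsign]

theorem fsign_insert {I : Finset V} {w : V} (hw : w ∉ I) (v : V) :
    fsign (insert w I) v = (if w < v then -1 else 1) * fsign I v := by
  unfold fsign
  rw [filter_insert]
  split_ifs
  · rw [card_insert_of_notMem (by simp [hw]), pow_succ']
  · rw [one_mul]

theorem fsign_insert_mul_fsign_insert {K : Finset V} {v w : V} (hv : v ∉ K) (hw : w ∉ K)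
    (hvw : v ≠ w) :
    fsign (insert w K) v * fsign (insert v K) w = -(fsign K w * fsign K v) := by
  rw [fsign_insert hw, fsign_insert hv]
  rcases hvw.lt_or_gt with h | h
  · rw [if_neg h.not_gt, if_pos h]
    ring
  · rw [if_pos h, if_neg h.not_gt]
    ring

/-- The simplicial coboundary on functions of finite vertex sets. The supercharge is its
restriction to the independence complex. -/
noncomputable def coboundary : (Finset V → ℂ) →ₗ[ℂ] (Finset V → ℂ) where
  toFun f J := ∑ v ∈ J, fsign (J.erase v) v * f (J.erase v)
  map_add' f g := by ext J; simp [mul_add, sum_add_distrib]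
  map_smul' c f := by ext J; simp [mul_sum, mul_left_comm]

theorem coboundary_apply (f : Finset V → ℂ) (J : Finset V) :
    coboundary f J = ∑ v ∈ J, fsign (J.erase v) v * f (J.erase v) :=
  rfl

theorem coboundary_congr {f g : Finset V → ℂ} {J : Finset V}
    (h : ∀ v ∈ J, f (J.erase v) = g (J.erase v)) : coboundary f J = coboundary g J :=
  sum_congr rfl fun v hv => by rw [h v hv]

/-- The annihilation operator of `v`: contraction of a cochain with the vertex `v`, which sends
cochains on a complex to cochains on the link of `v`. -/
noncomputable def contraction (v : V) : (Finset V → ℂ) →ₗ[ℂ] (Finset V → ℂ) where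
  toFun f I := if v ∈ I then 0 else fsign I v * f (insert v I)
  map_add' f g := by ext I; by_cases hv : v ∈ I <;> simp [hv, mul_add]
  map_smul' c f := by ext I; by_cases hv : v ∈ I <;> simp [hv, mul_left_comm]

theorem contraction_of_mem (f : Finset V → ℂ) {v : V} {I : Finset V} (hv : v ∈ I) :
    contraction v f I = 0 :=
  if_pos hv

theorem contraction_of_notMem (f : Finset V → ℂ) {v : V} {I : Finset V} (hv : v ∉ I) :
    contraction v f I = fsign I v * f (insert v I) :=
  if_neg hv

theorem coboundary_insert (f : Finset V → ℂ) {v : V} {J : Finset V} (hv : v ∉ J) :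
    coboundary f (insert v J) =
      fsign J v * f J + ∑ w ∈ J, fsign (insert v (J.erase w)) w * f (insert v (J.erase w)) := by
  rw [coboundary_apply, sum_insert hv, erase_insert hv]
  congr 1
  exact sum_congr rfl fun w hw => by rw [erase_insert_of_ne (ne_of_mem_of_not_mem hw hv).symm]

-- Creation and annihilation at `v` anticommute to the identity; `coboundary` is the sum of all
-- creation operators, and those at `w ≠ v` anticommute with `contraction v`.
theorem contraction_coboundary_add_coboundary_contraction (v : V) (f : Finset V → ℂ) :
    contraction v (coboundary f) + coboundary (contraction v f) = f := by
  ext J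
  rw [Pi.add_apply]
  by_cases hv : v ∈ J
  · have hother : ∀ w ∈ J, w ≠ v →
        fsign (J.erase w) w * contraction v f (J.erase w) = 0 := fun w _ hw => by
      rw [contraction_of_mem f (mem_erase_of_ne_of_mem hw.symm hv), mul_zero]
    rw [contraction_of_mem _ hv, zero_add, coboundary_apply, sum_eq_single_of_mem v hv hother,
      contraction_of_notMem f (notMem_erase v J), insert_erase hv, ← mul_assoc, fsign_mul_self,
      one_mul]
  · rw [contraction_of_notMem _ hv, coboundary_insert f hv, mul_add, ← mul_assoc, fsign_mul_self,
      one_mul, add_assoc, add_eq_left, mul_sum, coboundary_apply, ← sum_add_distrib]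
    refine sum_eq_zero fun w hw => ?_
    have hvw : v ≠ w := (ne_of_mem_of_not_mem hw hv).symm
    have hvK : v ∉ J.erase w := fun h => hv (mem_of_mem_erase h)
    have hsign := fsign_insert_mul_fsign_insert hvK (notMem_erase w J) hvw
    rw [insert_erase hw] at hsign
    rw [contraction_of_notMem f hvK, ← mul_assoc, hsign]
    ring

theorem coboundary_coboundary (f : Finset V → ℂ) : coboundary (coboundary f) = 0 := by
  ext J
  induction J using Finset.induction_on generalizing f with
  | empty => rw [coboundary_apply, sum_empty, Pi.zero_apply]
  | insert v J hv ih =>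
    have hcontr : contraction v (coboundary (coboundary f)) =
        coboundary (coboundary (contraction v f)) := by
      have h₁ := contraction_coboundary_add_coboundary_contraction v (coboundary f)
      have h₂ := congrArg coboundary (contraction_coboundary_add_coboundary_contraction v f)
      rw [map_add] at h₂
      exact add_right_cancel (h₁.trans (h₂.symm.trans (add_comm _ _)))
    have hJ := (congrFun hcontr J).trans (ih (contraction v f))
    rw [contraction_of_notMem _ hv] at hJ
    exact (mul_eq_zero.1 hJ).resolve_left (fsign_ne_zero J v)

end Coboundary

section EulerCharacteristic

variable {V : Type*}

/-- The reduced Euler characteristic of a simplicial complex `𝒜` containing the empty face, with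
the sign convention that the empty face counts `+1`. -/
def eulerChar (𝒜 : Finset (Finset V)) : ℤ :=
  ∑ I ∈ 𝒜, (-1) ^ #I

theorem eulerChar_eq_card_even_sub_card_odd (𝒜 : Finset (Finset V)) :
    eulerChar 𝒜 = #{I ∈ 𝒜 | Even #I} - #{I ∈ 𝒜 | Odd #I} := by
  simp only [eulerChar, ← sum_filter_add_sum_filter_not 𝒜 (fun I => Even #I), Nat.not_even_iff_odd]
  rw [sum_congr rfl fun I hI => (mem_filter.1 hI).2.neg_one_pow, sum_congr (s₁ := {I ∈ 𝒜 | Odd #I})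
    rfl fun I hI => (mem_filter.1 hI).2.neg_one_pow]
  simp [sub_eq_add_neg]

variable [DecidableEq V] {𝒜 : Finset (Finset V)} {v : V}

theorem eulerChar_eq_nonMemberSubfamily_sub_memberSubfamily (𝒜 : Finset (Finset V)) (v : V) :
    eulerChar 𝒜 = eulerChar (𝒜.nonMemberSubfamily v) - eulerChar (𝒜.memberSubfamily v) := by
  have hlink : eulerChar {I ∈ 𝒜 | v ∈ I} = -eulerChar (𝒜.memberSubfamily v) := by
    have hinj : Set.InjOn (insert v) (𝒜.memberSubfamily v : Set (Finset V)) :=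
      (insert_erase_invOn (a := v)).2.injOn.mono fun I hI => (mem_memberSubfamily.1 hI).2
    rw [← image_insert_memberSubfamily, eulerChar, sum_image hinj, eulerChar, ← sum_neg_distrib]
    refine sum_congr rfl fun I hI => ?_
    rw [card_insert_of_notMem (mem_memberSubfamily.1 hI).2, pow_succ, mul_neg_one]
  rw [sub_eq_add_neg, ← hlink, add_comm]
  exact (sum_filter_add_sum_filter_not 𝒜 (v ∈ ·) _).symm

theorem eulerChar_eq_zero_of_cone (hcone : 𝒜.nonMemberSubfamily v = 𝒜.memberSubfamily v) :
    eulerChar 𝒜 = 0 := by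
  rw [eulerChar_eq_nonMemberSubfamily_sub_memberSubfamily 𝒜 v, hcone, sub_self]

end EulerCharacteristic

section CochainsOfSetFamilies

variable {V : Type*} [LinearOrder V] {𝒜 : Finset (Finset V)} {v : V}

/-- Restriction of a cochain to the faces avoiding `v`. -/
noncomputable def deletion (v : V) : (Finset V → ℂ) →ₗ[ℂ] (Finset V → ℂ) where
  toFun f J := if v ∈ J then 0 else f J
  map_add' f g := by ext J; by_cases hv : v ∈ J <;> simp [hv]
  map_smul' c f := by ext J; by_cases hv : v ∈ J <;> simp [hv]

theorem deletion_of_mem (f : Finset V → ℂ) {J : Finset V} (hv : v ∈ J) : deletion v f J = 0 :=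
  if_pos hv

theorem deletion_of_notMem (f : Finset V → ℂ) {J : Finset V} (hv : v ∉ J) :
    deletion v f J = f J :=
  if_neg hv

theorem eq_zero_of_deletion_eq_zero {f : Finset V → ℂ} (hf : deletion v f = 0) {J : Finset V}
    (hv : v ∉ J) : f J = 0 := by
  rw [← deletion_of_notMem f hv, hf, Pi.zero_apply]

theorem coboundary_deletion (f : Finset V → ℂ) {J : Finset V} (hv : v ∉ J) :
    coboundary (deletion v f) J = coboundary f J :=
  coboundary_congr fun _ _ => deletion_of_notMem f fun h => hv (mem_of_mem_erase h)

theorem disjoint_ker_deletion_ker_contraction (v : V) :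
    Disjoint (LinearMap.ker (deletion v)) (LinearMap.ker (contraction v)) := by
  refine Submodule.disjoint_def.2 fun f hdel hcontr => funext fun J => ?_
  by_cases hv : v ∈ J
  · have h := congrFun (LinearMap.mem_ker.1 hcontr) (J.erase v)
    rw [contraction_of_notMem f (notMem_erase v J), insert_erase hv] at h
    exact (mul_eq_zero.1 h).resolve_left (fsign_ne_zero _ v)
  · exact eq_zero_of_deletion_eq_zero hdel hv

variable [Finite V]

/-- The cocycles of the complex `𝒜`: functions supported on `𝒜` whose coboundary vanishes on
`𝒜`, in all degrees at once. -/
noncomputable def cocycles (𝒜 : Finset (Finset V)) : Submodule ℂ (Finset V → ℂ) :=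
  Pi.spanSubset ℂ (𝒜 : Set (Finset V)) ⊓
    (Pi.spanSubset ℂ (𝒜 : Set (Finset V))ᶜ).comap coboundary

theorem mem_cocycles {f : Finset V → ℂ} :
    f ∈ cocycles 𝒜 ↔ (∀ J ∉ 𝒜, f J = 0) ∧ ∀ J ∈ 𝒜, coboundary f J = 0 := by
  simp [cocycles, Pi.mem_spanSubset_iff]

/-- The total reduced Betti number `2 dim Z - dim C` of a simplicial complex `𝒜`, where `C` and
`Z` are its cochains and cocycles in all degrees: the coboundaries have dimension
`dim C - dim Z`. -/
noncomputable def totalBetti (𝒜 : Finset (Finset V)) : ℤ :=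
  2 * finrank ℂ (cocycles 𝒜) - #𝒜

theorem contraction_mem_spanSubset_memberSubfamily {f : Finset V → ℂ} (hf : ∀ J ∉ 𝒜, f J = 0) :
    contraction v f ∈ Pi.spanSubset ℂ (𝒜.memberSubfamily v : Set (Finset V)) := by
  refine Pi.mem_spanSubset_iff.2 fun I hI => ?_
  by_cases hv : v ∈ I
  · exact contraction_of_mem f hv
  · rw [contraction_of_notMem f hv, hf _ fun h => hI (mem_memberSubfamily.2 ⟨h, hv⟩), mul_zero]

theorem map_deletion_cocycles_le (𝒜 : Finset (Finset V)) (v : V) :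
    (cocycles 𝒜).map (deletion v) ≤ cocycles (𝒜.nonMemberSubfamily v) := by
  rintro _ ⟨f, hf, rfl⟩
  obtain ⟨hsupp, hcocycle⟩ := mem_cocycles.1 hf
  refine mem_cocycles.2 ⟨fun J hJ => ?_, fun J hJ => ?_⟩
  · by_cases hv : v ∈ J
    · exact deletion_of_mem f hv
    · rw [deletion_of_notMem f hv, hsupp J fun h => hJ (mem_nonMemberSubfamily.2 ⟨h, hv⟩)]
  · obtain ⟨hJ𝒜, hv⟩ := mem_nonMemberSubfamily.1 hJ
    rw [coboundary_deletion f hv, hcocycle J hJ𝒜]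

theorem map_contraction_cocycles_inf_ker_deletion_le (𝒜 : Finset (Finset V)) (v : V) :
    (cocycles 𝒜 ⊓ LinearMap.ker (deletion v)).map (contraction v) ≤
      cocycles (𝒜.memberSubfamily v) := by
  rintro _ ⟨f, ⟨hf, hdel⟩, rfl⟩
  obtain ⟨hsupp, hcocycle⟩ := mem_cocycles.1 hf
  refine mem_cocycles.2 ⟨Pi.mem_spanSubset_iff.1
    (contraction_mem_spanSubset_memberSubfamily hsupp), fun J hJ => ?_⟩
  obtain ⟨hJ𝒜, hv⟩ := mem_memberSubfamily.1 hJ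
  have h := congrFun (contraction_coboundary_add_coboundary_contraction v f) J
  rwa [Pi.add_apply, contraction_of_notMem _ hv, hcocycle _ hJ𝒜, mul_zero, zero_add,
    eq_zero_of_deletion_eq_zero hdel hv] at h

-- The part of the long exact sequence of (complex, deletion, link) that survives without tracking
-- degrees.
theorem totalBetti_le_nonMemberSubfamily_add_memberSubfamily (𝒜 : Finset (Finset V)) (v : V) :
    totalBetti 𝒜 ≤ totalBetti (𝒜.nonMemberSubfamily v) + totalBetti (𝒜.memberSubfamily v) := by
  have hsplit := finrank_map_add_finrank_inf_ker (deletion v) (cocycles 𝒜)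
  have hdel := Submodule.finrank_mono (map_deletion_cocycles_le 𝒜 v)
  have hlink := finrank_le_of_map_le_of_disjoint_ker
    (map_contraction_cocycles_inf_ker_deletion_le 𝒜 v)
    ((disjoint_ker_deletion_ker_contraction v).mono_left inf_le_right)
  have hcard := card_memberSubfamily_add_card_nonMemberSubfamily v 𝒜
  unfold totalBetti
  omega

theorem disjoint_cocycles_ker_contraction (hcone : 𝒜.nonMemberSubfamily v ⊆ 𝒜.memberSubfamily v) :
    Disjoint (cocycles 𝒜) (LinearMap.ker (contraction v)) := by
  refine Submodule.disjoint_def.2 fun f hf hcontr => funext fun J => ?_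
  obtain ⟨hsupp, hcocycle⟩ := mem_cocycles.1 hf
  have hf_eq : contraction v (coboundary f) = f := by
    have h := contraction_coboundary_add_coboundary_contraction v f
    rwa [LinearMap.mem_ker.1 hcontr, map_zero, add_zero] at h
  by_cases hv : v ∈ J
  · rw [← hf_eq, contraction_of_mem _ hv, Pi.zero_apply]
  by_cases hJ : J ∈ 𝒜
  · have hvJ := (mem_memberSubfamily.1 (hcone (mem_nonMemberSubfamily.2 ⟨hJ, hv⟩))).1
    rw [← hf_eq, contraction_of_notMem _ hv, hcocycle _ hvJ, mul_zero, Pi.zero_apply]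
  · exact hsupp J hJ

theorem totalBetti_nonpos_of_cone (hcone : 𝒜.nonMemberSubfamily v = 𝒜.memberSubfamily v) :
    totalBetti 𝒜 ≤ 0 := by
  have hmap : (cocycles 𝒜).map (contraction v) ≤
      Pi.spanSubset ℂ (𝒜.memberSubfamily v : Set (Finset V)) := by
    rintro _ ⟨f, hf, rfl⟩
    exact contraction_mem_spanSubset_memberSubfamily (mem_cocycles.1 hf).1
  have hle := finrank_le_of_map_le_of_disjoint_ker hmap
    (disjoint_cocycles_ker_contraction hcone.subset)
  rw [Pi.dim_spanSubset, Set.ncard_coe_finset] at hle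
  have hcard := card_memberSubfamily_add_card_nonMemberSubfamily v 𝒜
  rw [hcone] at hcard
  unfold totalBetti
  omega

theorem totalBetti_singleton_empty : totalBetti ({∅} : Finset (Finset V)) ≤ 1 := by
  have hle : finrank ℂ (cocycles ({∅} : Finset (Finset V))) ≤
      finrank ℂ (Pi.spanSubset ℂ (({∅} : Finset (Finset V)) : Set (Finset V))) :=
    Submodule.finrank_mono inf_le_left
  rw [Pi.dim_spanSubset, Set.ncard_coe_finset, card_singleton] at hle
  rw [totalBetti, card_singleton]
  omega

end CochainsOfSetFamilies

section IndependenceComplex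

theorem indep_insert {V : Type*} [DecidableEq V] {G : SimpleGraph V} {I : Finset V} {v : V} :
    Indep G (insert v I) ↔ Indep G I ∧ ∀ x ∈ I, ¬G.Adj v x := by
  refine ⟨fun h => ⟨h.mono (subset_insert v I), fun x hx =>
    h (mem_insert_self v I) (mem_insert_of_mem hx)⟩, fun ⟨hI, hv⟩ => ?_⟩
  simp only [Indep, forall_mem_insert]
  exact ⟨⟨G.loopless.irrefl v, hv⟩, fun x hx => ⟨fun h => hv x hx h.symm, hI hx⟩⟩

variable {V : Type*} [Fintype V] {G : SimpleGraph V} {S : Set V} {v : V}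

open Classical in
/-- The independence complex of the induced subgraph `G[S]`, including the empty face. -/
noncomputable def indepComplex (G : SimpleGraph V) (S : Set V) : Finset (Finset V) :=
  {I | ↑I ⊆ S ∧ Indep G I}

theorem mem_indepComplex {I : Finset V} : I ∈ indepComplex G S ↔ ↑I ⊆ S ∧ Indep G I := by
  simp [indepComplex]

theorem indepComplex_empty (G : SimpleGraph V) : indepComplex G ∅ = {∅} := by
  ext I
  rw [mem_indepComplex, Set.subset_empty_iff, coe_eq_empty, mem_singleton, and_iff_left_iff_imp]
  rintro rfl
  exact fun a ha => absurd ha (notMem_empty a)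

variable [DecidableEq V]

theorem nonMemberSubfamily_indepComplex (G : SimpleGraph V) (S : Set V) (v : V) :
    (indepComplex G S).nonMemberSubfamily v = indepComplex G (S \ {v}) := by
  ext I
  simp only [mem_nonMemberSubfamily, mem_indepComplex, Set.subset_sdiff,
    Set.disjoint_singleton_right, mem_coe]
  tauto

theorem memberSubfamily_indepComplex (G : SimpleGraph V) (hv : v ∈ S) :
    (indepComplex G S).memberSubfamily v = indepComplex G (S \ insert v (G.neighborSet v)) := by
  ext I
  have hnbr : Disjoint (I : Set V) (G.neighborSet v) ↔ ∀ x ∈ I, ¬G.Adj v x :=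
    Set.disjoint_left
  simp only [mem_memberSubfamily, mem_indepComplex, coe_insert, Set.insert_subset_iff,
    indep_insert, Set.subset_sdiff, Set.disjoint_insert_right, mem_coe, hnbr, hv, true_and]
  tauto

end IndependenceComplex

section Supersymmetry

theorem injective_indepSet_val {V : Type*} (G : SimpleGraph V) :
    Function.Injective fun I : IndepSet G => I.1 :=
  Subtype.val_injective

variable {V : Type*} [Fintype V] [LinearOrder V] {G : SimpleGraph V}

/-- Extension by zero of a state of the hard-core model to a cochain on all finite vertex sets. -/
noncomputable def extendByZero (G : SimpleGraph V) : FockSpace G →ₗ[ℂ] (Finset V → ℂ) :=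
  Function.ExtendByZero.linearMap ℂ (fun I : IndepSet G => I.1) ∘ₗ
    (WithLp.linearEquiv 2 ℂ (IndepSet G → ℂ)).toLinearMap

theorem extendByZero_val (ψ : FockSpace G) (I : IndepSet G) : extendByZero G ψ I.1 = ψ I :=
  (injective_indepSet_val G).extend_apply _ _ I

theorem extendByZero_of_not_indep (ψ : FockSpace G) {J : Finset V} (hJ : ¬Indep G J) :
    extendByZero G ψ J = 0 :=
  Function.extend_apply' _ _ _ fun ⟨I, hI⟩ => hJ (hI ▸ I.2)

theorem supercharge_apply (ψ : FockSpace G) (J : IndepSet G) :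
    supercharge G ψ J = coboundary (extendByZero G ψ) J.1 :=
  sum_congr rfl fun v _ => by
    rw [← extendByZero_val ψ ⟨J.1.erase v, J.2.mono (erase_subset v J.1)⟩]

theorem supercharge_comp_supercharge (G : SimpleGraph V) :
    supercharge G ∘ₗ supercharge G = 0 := by
  ext ψ J
  have hface : ∀ v ∈ J.1, extendByZero G (supercharge G ψ) (J.1.erase v) =
      coboundary (extendByZero G ψ) (J.1.erase v) := fun v _ => by
    let K : IndepSet G := ⟨J.1.erase v, J.2.mono (erase_subset v J.1)⟩
    rw [← supercharge_apply ψ K, ← extendByZero_val _ K]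
  rw [LinearMap.comp_apply, supercharge_apply, coboundary_congr hface, coboundary_coboundary]
  rfl

theorem finrank_fockSpace (G : SimpleGraph V) :
    finrank ℂ (FockSpace G) = #(indepComplex G Set.univ) := by
  rw [finrank_euclideanSpace]
  refine card_bij (fun I _ => I.1) (fun I _ => mem_indepComplex.2 ⟨Set.subset_univ _, I.2⟩)
    (fun _ _ _ _ h => injective_indepSet_val G h) fun I hI => ?_
  exact ⟨⟨I, (mem_indepComplex.1 hI).2⟩, mem_univ _, rfl⟩

theorem finrank_ker_supercharge_le (G : SimpleGraph V) :
    finrank ℂ (LinearMap.ker (supercharge G)) ≤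
      finrank ℂ (cocycles (indepComplex G Set.univ)) := by
  refine finrank_le_of_map_le_of_disjoint_ker (f := extendByZero G) ?_
    (Submodule.disjoint_def.2 fun ψ _ hψ => ?_)
  · rintro _ ⟨ψ, hψ, rfl⟩
    refine mem_cocycles.2 ⟨fun J hJ => extendByZero_of_not_indep ψ ?_, fun J hJ => ?_⟩
    · exact fun h => hJ (mem_indepComplex.2 ⟨Set.subset_univ _, h⟩)
    · rw [← supercharge_apply ψ ⟨J, (mem_indepComplex.1 hJ).2⟩, LinearMap.mem_ker.1 hψ]
      rfl
  · ext I
    rw [← extendByZero_val, LinearMap.mem_ker.1 hψ]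
    rfl

theorem finrank_ker_hamiltonian_add_finrank (G : SimpleGraph V) :
    finrank ℂ (LinearMap.ker (hamiltonian G)) + #(indepComplex G Set.univ) =
      2 * finrank ℂ (LinearMap.ker (supercharge G)) := by
  rw [← finrank_fockSpace]
  exact finrank_ker_laplacian_add_finrank (supercharge_comp_supercharge G)

theorem finrank_ker_hamiltonian_le_totalBetti (G : SimpleGraph V) :
    (finrank ℂ (LinearMap.ker (hamiltonian G)) : ℤ) ≤ totalBetti (indepComplex G Set.univ) := by
  have hhodge := finrank_ker_hamiltonian_add_finrank G
  have hker := finrank_ker_supercharge_le G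
  unfold totalBetti
  omega

/-- The states supported on the independent sets whose cardinality satisfies `P`. -/
noncomputable def cardSector (G : SimpleGraph V) (P : ℕ → Prop) : Submodule ℂ (FockSpace G) :=
  Submodule.span ℂ ((EuclideanSpace.basisFun (IndepSet G) ℂ).toBasis '' {I | P #I.1})

theorem mem_cardSector {P : ℕ → Prop} {ψ : FockSpace G} :
    ψ ∈ cardSector G P ↔ ∀ I : IndepSet G, ¬P #I.1 → ψ I = 0 := by
  simp only [cardSector, Basis.mem_span_image, Set.subset_def, mem_coe, Finsupp.mem_support_iff,
    OrthonormalBasis.coe_toBasis_repr_apply, EuclideanSpace.basisFun_repr, Set.mem_ofPred_eq]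
  exact forall_congr' fun I => not_imp_comm

theorem finrank_cardSector (G : SimpleGraph V) (P : ℕ → Prop) [DecidablePred P] :
    finrank ℂ (cardSector G P) = #{I ∈ indepComplex G Set.univ | P #I} := by
  rw [cardSector, finrank_span_basis_image, ← Set.ncard_coe_finset]
  refine Set.ncard_congr (fun I _ => I.1) (fun I hI => ?_)
    (fun _ _ _ _ h => injective_indepSet_val G h) fun I hI => ?_
  · exact mem_filter.2 ⟨mem_indepComplex.2 ⟨Set.subset_univ _, I.2⟩, hI⟩
  · obtain ⟨hindep, hP⟩ := mem_filter.1 hI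
    exact ⟨⟨I, (mem_indepComplex.1 hindep).2⟩, hP, rfl⟩

theorem disjoint_cardSector {P P' : ℕ → Prop} (hPP' : ∀ n, P n → ¬P' n) :
    Disjoint (cardSector G P) (cardSector G P') := by
  refine Submodule.disjoint_def.2 fun ψ hψ hψ' => ?_
  ext I
  by_cases hI : P #I.1
  · exact mem_cardSector.1 hψ' I (hPP' _ hI)
  · exact mem_cardSector.1 hψ I hI

theorem map_supercharge_cardSector_le {P P' : ℕ → Prop} (hPP' : ∀ n, P n → P' (n + 1)) :
    (cardSector G P).map (supercharge G) ≤ cardSector G P' := by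
  rintro _ ⟨ψ, hψ, rfl⟩
  refine mem_cardSector.2 fun J hJ => ?_
  refine sum_eq_zero fun v hv => mul_eq_zero_of_right _ (mem_cardSector.1 hψ _ fun hP => hJ ?_)
  rw [← card_erase_add_one hv]
  exact hPP' _ hP

theorem finrank_cardSector_le_finrank_ker_supercharge (G : SimpleGraph V) {P P' : ℕ → Prop}
    (hdisj : ∀ n, P n → ¬P' n) (hsucc : ∀ n, P n → P' (n + 1)) :
    finrank ℂ (cardSector G P) ≤ finrank ℂ (LinearMap.ker (supercharge G)) :=
  finrank_le_finrank_ker_of_map_le (supercharge_comp_supercharge G) (disjoint_cardSector hdisj)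
    (map_supercharge_cardSector_le hsucc)

theorem abs_eulerChar_le_finrank_ker_hamiltonian (G : SimpleGraph V) :
    |eulerChar (indepComplex G Set.univ)| ≤ finrank ℂ (LinearMap.ker (hamiltonian G)) := by
  have hhodge := finrank_ker_hamiltonian_add_finrank G
  have heven := finrank_cardSector_le_finrank_ker_supercharge G (P := Even) (P' := Odd)
    (fun _ => Nat.not_odd_iff_even.2) fun _ => Even.add_one
  have hodd := finrank_cardSector_le_finrank_ker_supercharge G (P := Odd) (P' := Even)
    (fun _ => Nat.not_even_iff_odd.2) fun _ => Odd.add_one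
  rw [finrank_cardSector] at heven hodd
  have hcard := card_filter_add_card_filter_not (s := indepComplex G Set.univ) (fun I => Even #I)
  simp only [Nat.not_even_iff_odd] at hcard
  rw [eulerChar_eq_card_even_sub_card_odd, abs_le]
  omega

/-- The independence complex of `G[S]` has total Betti number at most `n` and the reduced Euler
characteristic of a wedge of `n` spheres of dimension `d - 1`. For `S = Set.univ` this determines
the number of ground states. -/
def SphereWedgeLike (G : SimpleGraph V) (S : Set V) (d n : ℕ) : Prop :=
  totalBetti (indepComplex G S) ≤ n ∧ eulerChar (indepComplex G S) = (-1) ^ d * n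

theorem SphereWedgeLike.finrank_ker_hamiltonian {d n : ℕ} (h : SphereWedgeLike G Set.univ d n) :
    finrank ℂ (LinearMap.ker (hamiltonian G)) = n := by
  have hupper := (finrank_ker_hamiltonian_le_totalBetti G).trans h.1
  have hlower := abs_eulerChar_le_finrank_ker_hamiltonian G
  rw [h.2, abs_mul, abs_neg_one_pow, one_mul, Nat.abs_cast] at hlower
  exact_mod_cast hupper.antisymm hlower

end Supersymmetry

section GraphMoves

variable {V : Type*} [Fintype V] [LinearOrder V] {G : SimpleGraph V} {S : Set V} {d n : ℕ}

namespace SphereWedgeLike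

theorem empty (G : SimpleGraph V) : SphereWedgeLike G ∅ 0 1 := by
  rw [SphereWedgeLike, indepComplex_empty]
  exact ⟨totalBetti_singleton_empty, by simp [eulerChar]⟩

theorem of_deletion_of_link {v : V} {d' m : ℕ} (hv : v ∈ S)
    (hdel : SphereWedgeLike G (S \ {v}) d n)
    (hlink : SphereWedgeLike G (S \ insert v (G.neighborSet v)) d' m) (hparity : Odd (d + d')) :
    SphereWedgeLike G S d (n + m) := by
  have hsign : (-1 : ℤ) ^ d' = -(-1) ^ d := by
    rcases d.even_or_odd with hd | hd
    · rw [hd.neg_one_pow, (Nat.odd_add'.1 hparity).2 hd |>.neg_one_pow]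
    · rw [hd.neg_one_pow, (Nat.odd_add.1 hparity).1 hd |>.neg_one_pow, neg_neg]
  have hbetti := totalBetti_le_nonMemberSubfamily_add_memberSubfamily (indepComplex G S) v
  have heuler := eulerChar_eq_nonMemberSubfamily_sub_memberSubfamily (indepComplex G S) v
  rw [nonMemberSubfamily_indepComplex, memberSubfamily_indepComplex G hv] at hbetti heuler
  refine ⟨hbetti.trans ?_, ?_⟩
  · rw [Nat.cast_add]
    exact add_le_add hdel.1 hlink.1
  · rw [heuler, hdel.2, hlink.2, hsign, Nat.cast_add]
    ring

theorem of_isolated {u : V} (hu : u ∈ S) (hisolated : ∀ x ∈ S, ¬G.Adj u x) (d : ℕ) :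
    SphereWedgeLike G S d 0 := by
  have hcone : (indepComplex G S).nonMemberSubfamily u = (indepComplex G S).memberSubfamily u := by
    have hlink : S \ insert u (G.neighborSet u) = S \ {u} := by
      rw [← Set.union_singleton, ← Set.sdiff_sdiff,
        (Set.disjoint_left.2 hisolated : Disjoint S (G.neighborSet u)).sdiff_eq_left]
    rw [nonMemberSubfamily_indepComplex, memberSubfamily_indepComplex G hu, hlink]
  rw [SphereWedgeLike, eulerChar_eq_zero_of_cone hcone, Nat.cast_zero, mul_zero]
  exact ⟨totalBetti_nonpos_of_cone hcone, rfl⟩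

theorem of_fold {u v : V} (hu : u ∈ S) (huv : u ≠ v) (hnadj : ¬G.Adj v u)
    (hdom : ∀ x ∈ S, G.Adj u x → G.Adj v x) (h : SphereWedgeLike G (S \ {v}) d n) :
    SphereWedgeLike G S d n := by
  by_cases hv : v ∈ S
  · have hu_link : u ∈ S \ insert v (G.neighborSet v) := ⟨hu, by simp [huv, hnadj]⟩
    have hlink : SphereWedgeLike G (S \ insert v (G.neighborSet v)) (d + 1) 0 :=
      of_isolated hu_link (fun x hx hux => hx.2 (Set.mem_insert_of_mem v (hdom x hx.1 hux))) _
    exact of_deletion_of_link hv h hlink ⟨d, by ring⟩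
  · rwa [Set.sdiff_singleton_eq_self hv] at h

theorem of_fold_set (T : Set V)
    (hT : ∀ v ∈ T, ∃ u ∈ S \ T, ¬G.Adj v u ∧ ∀ x ∈ S, G.Adj u x → G.Adj v x)
    (h : SphereWedgeLike G (S \ T) d n) : SphereWedgeLike G S d n := by
  induction T, T.toFinite using Set.Finite.induction_on with
  | empty => rwa [Set.sdiff_empty] at h
  | @insert v T _ _ ih =>
    refine ih (fun w hw => ?_) ?_
    · obtain ⟨u, hu, hdom⟩ := hT w (Set.mem_insert_of_mem v hw)
      exact ⟨u, ⟨hu.1, fun huT => hu.2 (Set.mem_insert_of_mem v huT)⟩, hdom⟩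
    · obtain ⟨u, ⟨huS, huT⟩, hnadj, hdom⟩ := hT v (Set.mem_insert v T)
      rw [Set.mem_insert_iff, not_or] at huT
      rw [← Set.union_singleton, ← Set.sdiff_sdiff] at h
      exact of_fold ⟨huS, huT.2⟩ huT.1 hnadj (fun x hx => hdom x hx.1) h

theorem of_leaf {u w : V} (hu : u ∈ S) (hw : w ∈ S) (huw : u ≠ w)
    (hleaf : ∀ x ∈ S, G.Adj u x → x = w)
    (h : SphereWedgeLike G (S \ insert w (G.neighborSet w)) d n) :
    SphereWedgeLike G S (d + 1) n := by
  have hu_del : u ∈ S \ {w} := ⟨hu, huw⟩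
  have hdel : SphereWedgeLike G (S \ {w}) (d + 1) 0 :=
    of_isolated hu_del (fun x hx hux => hx.2 (hleaf x hx.1 hux)) _
  have hS := of_deletion_of_link hw hdel h ⟨d, by ring⟩
  rwa [zero_add] at hS

end SphereWedgeLike

end GraphMoves

section Components

variable {V W W₁ W₂ : Type*} {G : SimpleGraph V} {H : SimpleGraph W} {H₁ : SimpleGraph W₁}
  {H₂ : SimpleGraph W₂} {φ : H ↪g G} {S : Set V}

/-- The image of `φ` is disjoint from `S` and no edge of `G` joins the two, so that `G[S ∪ range φ]`
is the disjoint union of `G[S]` and a copy of `H`. -/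
def SeparatedFrom (φ : H ↪g G) (S : Set V) : Prop :=
  ∀ i, φ i ∉ S ∧ ∀ x ∈ S, ¬G.Adj (φ i) x

namespace SeparatedFrom

theorem comp (hφ : SeparatedFrom φ S) (ψ : H₁ ↪g H) : SeparatedFrom (φ.comp ψ) S :=
  fun i => hφ (ψ i)

theorem sdiff_singleton (hφ : SeparatedFrom φ S) {v : W} {ψ : H₁ ↪g H}
    (hψ : ∀ i, i ∈ Set.range ψ ↔ i ≠ v) :
    (S ∪ Set.range φ) \ {φ v} = S ∪ Set.range (φ.comp ψ) := by
  have hψ' : Set.range ψ = {v}ᶜ := Set.ext hψ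
  have hS : S \ {φ v} = S := Set.sdiff_singleton_eq_self (hφ v).1
  rw [RelEmbedding.coe_trans, Set.range_comp, hψ', Set.union_sdiff_distrib, hS,
    Set.image_compl_eq_range_sdiff_image φ.injective, Set.image_singleton]

theorem sdiff_insert_neighborSet (hφ : SeparatedFrom φ S) {v : W} {χ : H₂ ↪g H}
    (hχ : ∀ i, i ∈ Set.range χ ↔ i ≠ v ∧ ¬H.Adj v i) :
    (S ∪ Set.range φ) \ insert (φ v) (G.neighborSet (φ v)) = S ∪ Set.range (φ.comp χ) := by
  have hS : S \ insert (φ v) (G.neighborSet (φ v)) = S :=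
    (Set.disjoint_left.2 fun x hx => by
      rintro (rfl | hadj)
      exacts [(hφ v).1 hx, (hφ v).2 x hx hadj]).sdiff_eq_left
  have hrange : Set.range φ \ insert (φ v) (G.neighborSet (φ v)) = φ '' Set.range χ := by
    ext x
    constructor
    · rintro ⟨⟨i, rfl⟩, hi⟩
      refine Set.mem_image_of_mem φ ((hχ i).2 ?_)
      simpa [φ.map_adj_iff] using hi
    · rintro ⟨i, hi, rfl⟩
      refine ⟨Set.mem_range_self i, ?_⟩
      simpa [φ.map_adj_iff] using (hχ i).1 hi
  rw [Set.union_sdiff_distrib, hS, hrange, RelEmbedding.coe_trans, Set.range_comp]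

variable [Fintype V] [LinearOrder V] {d n m : ℕ}

theorem sphereWedgeLike_of_deletion_of_link (hφ : SeparatedFrom φ S) {v : W} {ψ : H₁ ↪g H}
    {χ : H₂ ↪g H} (hψ : ∀ i, i ∈ Set.range ψ ↔ i ≠ v)
    (hχ : ∀ i, i ∈ Set.range χ ↔ i ≠ v ∧ ¬H.Adj v i)
    (hdel : SphereWedgeLike G (S ∪ Set.range (φ.comp ψ)) (d + 1) n)
    (hlink : SphereWedgeLike G (S ∪ Set.range (φ.comp χ)) d m) :
    SphereWedgeLike G (S ∪ Set.range φ) (d + 1) (n + m) := by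
  rw [← hφ.sdiff_singleton hψ] at hdel
  rw [← hφ.sdiff_insert_neighborSet hχ] at hlink
  exact .of_deletion_of_link (.inr (Set.mem_range_self v)) hdel hlink ⟨d, by ring⟩

theorem sphereWedgeLike_of_leaf (hφ : SeparatedFrom φ S) {u w : W} (huw : u ≠ w)
    (hleaf : ∀ i, H.Adj u i → i = w) {χ : H₂ ↪g H}
    (hχ : ∀ i, i ∈ Set.range χ ↔ i ≠ w ∧ ¬H.Adj w i)
    (h : SphereWedgeLike G (S ∪ Set.range (φ.comp χ)) d n) :
    SphereWedgeLike G (S ∪ Set.range φ) (d + 1) n := by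
  rw [← hφ.sdiff_insert_neighborSet hχ] at h
  refine .of_leaf (.inr (Set.mem_range_self u)) (.inr (Set.mem_range_self w))
    (φ.injective.ne huw) ?_ h
  rintro x (hx | ⟨i, rfl⟩) hadj
  · exact absurd hadj ((hφ u).2 x hx)
  · exact congrArg φ (hleaf i (φ.map_adj_iff.1 hadj))

end SeparatedFrom

end Components

section PathsAndCycles

theorem cycleGraph_adj_iff_val {n : ℕ} (hn : 2 ≤ n) {a b : Fin n} :
    (SimpleGraph.cycleGraph n).Adj a b ↔ (a : ℕ) + 1 = b ∨ (b : ℕ) + 1 = a ∨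
      ((a : ℕ) = 0 ∧ (b : ℕ) + 1 = n) ∨ ((b : ℕ) = 0 ∧ (a : ℕ) + 1 = n) := by
  rw [SimpleGraph.cycleGraph_adj']
  rcases lt_trichotomy a b with hab | rfl | hab
  · rw [Fin.coe_sub_iff_le.2 hab.le, Fin.coe_sub_iff_lt.2 hab]
    omega
  · rw [Fin.coe_sub_iff_le.2 le_rfl]
    omega
  · rw [Fin.coe_sub_iff_le.2 hab.le, Fin.coe_sub_iff_lt.2 hab]
    omega

/-- The inclusion of the path on `N` vertices into the path on `N'` vertices, starting at `c`. -/
def pathGraphShift {N N' c : ℕ} (h : N + c ≤ N') :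
    SimpleGraph.pathGraph N ↪g SimpleGraph.pathGraph N' where
  toFun i := ⟨i + c, by omega⟩
  inj' i j hij := by simpa [Fin.ext_iff] using hij
  map_rel_iff' {i j} := by
    change (SimpleGraph.pathGraph N').Adj ⟨i + c, _⟩ ⟨j + c, _⟩ ↔ _
    simp only [SimpleGraph.pathGraph_adj]
    omega

/-- The inclusion of the path on `N` vertices into the cycle on `N'` vertices, starting at `c`. -/
def pathGraphToCycleGraph {N N' c : ℕ} (h : N + c ≤ N') (hlt : N < N') (h2 : 2 ≤ N') :
    SimpleGraph.pathGraph N ↪g SimpleGraph.cycleGraph N' where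
  toFun i := ⟨i + c, by omega⟩
  inj' i j hij := by simpa [Fin.ext_iff] using hij
  map_rel_iff' {i j} := by
    change (SimpleGraph.cycleGraph N').Adj ⟨i + c, _⟩ ⟨j + c, _⟩ ↔ _
    simp only [SimpleGraph.pathGraph_adj, cycleGraph_adj_iff_val h2]
    omega

theorem mem_range_fin_add {N N' c : ℕ} (f : Fin N → Fin N') (hf : ∀ i, (f i : ℕ) = i + c)
    (j : Fin N') :
    j ∈ Set.range f ↔ c ≤ j ∧ (j : ℕ) < N + c := by
  constructor
  · rintro ⟨i, rfl⟩
    rw [hf]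
    omega
  · rintro ⟨hc, hN⟩
    refine ⟨⟨j - c, by omega⟩, Fin.ext ?_⟩
    rw [hf]
    exact Nat.sub_add_cancel hc

theorem mem_range_pathGraphShift {N N' c : ℕ} (h : N + c ≤ N') (j : Fin N') :
    j ∈ Set.range (pathGraphShift h) ↔ c ≤ j ∧ (j : ℕ) < N + c :=
  mem_range_fin_add _ (fun _ => rfl) j

theorem mem_range_pathGraphToCycleGraph {N N' c : ℕ} (h : N + c ≤ N') (hlt : N < N')
    (h2 : 2 ≤ N') (j : Fin N') :
    j ∈ Set.range (pathGraphToCycleGraph h hlt h2) ↔ c ≤ j ∧ (j : ℕ) < N + c :=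
  mem_range_fin_add _ (fun _ => rfl) j

variable {V : Type*} [Fintype V] [LinearOrder V] {G : SimpleGraph V} {S : Set V} {d n : ℕ}

namespace SphereWedgeLike

theorem union_range_path_add_three {N : ℕ} {φ : SimpleGraph.pathGraph (N + 3) ↪g G}
    (hφ : SeparatedFrom φ S)
    (h : SphereWedgeLike G (S ∪ Set.range (φ.comp (pathGraphShift le_rfl))) d n) :
    SphereWedgeLike G (S ∪ Set.range φ) (d + 1) n := by
  refine hφ.sphereWedgeLike_of_leaf (u := 0) (w := 1) (by simp) (fun i hi => ?_)
    (fun i => ?_) h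
  · rw [SimpleGraph.pathGraph_adj, Fin.val_zero] at hi
    rw [Fin.ext_iff, Fin.val_one]
    omega
  · rw [mem_range_pathGraphShift, SimpleGraph.pathGraph_adj, Ne, Fin.ext_iff, Fin.val_one]
    omega

theorem union_range_path_three_mul (h : SphereWedgeLike G S d n) {k : ℕ}
    {φ : SimpleGraph.pathGraph (3 * k) ↪g G} (hφ : SeparatedFrom φ S) :
    SphereWedgeLike G (S ∪ Set.range φ) (d + k) n := by
  induction k with
  | zero =>
    have : IsEmpty (Fin (3 * 0)) := Fin.isEmpty
    rwa [Set.range_eq_empty, Set.union_empty]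
  | succ k ih => exact union_range_path_add_three hφ (ih (hφ.comp _))

theorem union_range_path_two (h : SphereWedgeLike G S d n) {φ : SimpleGraph.pathGraph 2 ↪g G}
    (hφ : SeparatedFrom φ S) : SphereWedgeLike G (S ∪ Set.range φ) (d + 1) n := by
  refine hφ.sphereWedgeLike_of_leaf (u := 0) (w := 1)
    (χ := pathGraphShift (N := 0) (c := 2) le_rfl) (by decide) (fun i hi => ?_) (fun i => ?_)
    (by rwa [Set.range_eq_empty, Set.union_empty])
  · rw [SimpleGraph.pathGraph_adj] at hi
    omega
  · rw [mem_range_pathGraphShift, SimpleGraph.pathGraph_adj]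
    omega

theorem union_range_path_three_mul_add_two (h : SphereWedgeLike G S d n) {k : ℕ}
    {φ : SimpleGraph.pathGraph (3 * k + 2) ↪g G} (hφ : SeparatedFrom φ S) :
    SphereWedgeLike G (S ∪ Set.range φ) (d + k + 1) n := by
  induction k with
  | zero => exact h.union_range_path_two hφ
  | succ k ih =>
    exact union_range_path_add_three (N := 3 * k + 2) hφ (ih (SeparatedFrom.comp hφ _))

theorem union_range_cycle_three_mul (h : SphereWedgeLike G S d n) {k : ℕ} (hk : k ≠ 0)
    {φ : SimpleGraph.cycleGraph (3 * k) ↪g G} (hφ : SeparatedFrom φ S) :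
    SphereWedgeLike G (S ∪ Set.range φ) (d + k) (2 * n) := by
  obtain ⟨k, rfl⟩ := Nat.exists_eq_succ_of_ne_zero hk
  obtain ⟨last, hlast⟩ : ∃ last : Fin (3 * (k + 1)), (last : ℕ) = 3 * k + 2 :=
    ⟨⟨3 * k + 2, by omega⟩, rfl⟩
  rw [two_mul]
  refine hφ.sphereWedgeLike_of_deletion_of_link (v := last)
    (ψ := pathGraphToCycleGraph (N := 3 * k + 2) (c := 0) (by omega) (by omega) (by omega))
    (χ := pathGraphToCycleGraph (N := 3 * k) (c := 1) (by omega) (by omega) (by omega))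
    (fun i => ?_) (fun i => ?_) (h.union_range_path_three_mul_add_two (hφ.comp _))
    (h.union_range_path_three_mul (hφ.comp _))
  · rw [mem_range_pathGraphToCycleGraph, Ne, Fin.ext_iff, hlast]
    omega
  · rw [mem_range_pathGraphToCycleGraph, cycleGraph_adj_iff_val (by omega), Ne, Fin.ext_iff, hlast]
    omega

end SphereWedgeLike

end PathsAndCycles

section Cylinder

/-- The vertices in the rows below height `j`. -/
def rowsBelow (M L j : ℕ) : Set (Fin M × Fin L × Fin 4) :=
  {x | (x.2.1 : ℕ) < j}

theorem rowsBelow_self (M L : ℕ) : rowsBelow M L L = Set.univ :=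
  Set.eq_univ_of_forall fun x => x.2.1.isLt

variable {M L : ℕ} [NeZero M]

theorem fin_eq_add_one_iff {a b : Fin M} :
    b = a + 1 ↔ (b : ℕ) = a + 1 ∨ ((a : ℕ) + 1 = M ∧ (b : ℕ) = 0) := by
  rw [Fin.ext_iff, Fin.val_add, Fin.val_one', Nat.add_mod_mod]
  rcases eq_or_lt_of_le (Nat.succ_le_of_lt a.isLt) with h | h
  · rw [Nat.succ_eq_add_one] at h
    rw [h, Nat.mod_self]
    omega
  · rw [Nat.mod_eq_of_lt h]
    omega

theorem octCylE_iff_val {a b : Fin M × Fin L × Fin 4} :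
    octCylE M L a b ↔
      ((a.1 : ℕ) = b.1 ∧ (a.2.1 : ℕ) = b.2.1 ∧
        ((a.2.2 : ℕ) + 1 = b.2.2 ∨ ((a.2.2 : ℕ) = 3 ∧ (b.2.2 : ℕ) = 0))) ∨
      (((b.1 : ℕ) = a.1 + 1 ∨ ((a.1 : ℕ) + 1 = M ∧ (b.1 : ℕ) = 0)) ∧ (a.2.1 : ℕ) = b.2.1 ∧
        (a.2.2 : ℕ) = 1 ∧ (b.2.2 : ℕ) = 3) ∨
      ((a.1 : ℕ) = b.1 ∧ (b.2.1 : ℕ) = a.2.1 + 1 ∧ (a.2.2 : ℕ) = 2 ∧ (b.2.2 : ℕ) = 0) := by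
  have hsquare : ∀ c c' : Fin 4, ((c = 0 ∧ c' = 1) ∨ (c = 1 ∧ c' = 2) ∨ (c = 2 ∧ c' = 3) ∨
      (c = 3 ∧ c' = 0)) ↔ (c : ℕ) + 1 = c' ∨ ((c : ℕ) = 3 ∧ (c' : ℕ) = 0) := by decide
  rw [octCylE, hsquare, fin_eq_add_one_iff]
  simp only [Fin.ext_iff]
  rfl

theorem octCylinder_adj {a b : Fin M × Fin L × Fin 4} :
    (octCylinder M L).Adj a b ↔ octCylE M L a b ∨ octCylE M L b a := by
  refine and_iff_right_of_imp fun h hab => ?_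
  rw [hab, octCylE_iff_val] at h
  omega

theorem bottom_adj_of_top_adj {i : Fin M} {j : Fin L} {x : Fin M × Fin L × Fin 4}
    (hx : (x.2.1 : ℕ) ≤ j) (hadj : (octCylinder M L).Adj (i, j, 2) x) :
    (octCylinder M L).Adj (i, j, 0) x := by
  rw [octCylinder_adj, octCylE_iff_val, octCylE_iff_val] at hadj ⊢
  dsimp only at hadj ⊢
  have hside : (x.1 : ℕ) = i ∧ (x.2.1 : ℕ) = j ∧ ((x.2.2 : ℕ) = 1 ∨ (x.2.2 : ℕ) = 3) := by
    omega
  obtain ⟨hcol, hrow, hleft | hright⟩ := hside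
  · exact .inl (.inl ⟨hcol.symm, hrow.symm, .inl hleft.symm⟩)
  · exact .inr (.inl ⟨hcol, hrow, .inr ⟨hright, rfl⟩⟩)

/-- The vertices of types `3, 2, 1` of row `j`, enumerated cyclically from left to right. -/
def rowVertex (j : Fin L) (k : Fin (3 * M)) : Fin M × Fin L × Fin 4 :=
  (⟨k / 3, by omega⟩, j, ⟨3 - k % 3, by omega⟩)

theorem octCylE_rowVertex {j : Fin L} {a b : Fin (3 * M)} :
    octCylE M L (rowVertex j a) (rowVertex j b) ↔
      ((b : ℕ) + 1 = a ∧ (a : ℕ) % 3 ≠ 0) ∨ ((a : ℕ) + 1 = b ∧ (b : ℕ) % 3 = 0) ∨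
        ((a : ℕ) + 1 = 3 * M ∧ (b : ℕ) = 0) := by
  rw [octCylE_iff_val]
  dsimp only [rowVertex]
  constructor <;> omega

/-- The vertices of types `3, 2, 1` of row `j` induce a cycle of length `3 * M`. -/
def rowCycle (j : Fin L) : SimpleGraph.cycleGraph (3 * M) ↪g octCylinder M L where
  toFun := rowVertex j
  inj' a b h := by
    simp only [rowVertex, Prod.mk.injEq, Fin.mk.injEq] at h
    omega
  map_rel_iff' {a b} := by
    have hM := NeZero.pos M
    change (octCylinder M L).Adj (rowVertex j a) (rowVertex j b) ↔ _
    rw [octCylinder_adj, octCylE_rowVertex, octCylE_rowVertex, cycleGraph_adj_iff_val (by omega)]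
    omega

theorem range_rowCycle (j : Fin L) :
    Set.range (rowCycle j : _ ↪g octCylinder M L) = {x | x.2.1 = j ∧ x.2.2 ≠ 0} := by
  refine Set.Subset.antisymm ?_ ?_
  · rintro _ ⟨k, rfl⟩
    refine ⟨rfl, Fin.ne_of_val_ne ?_⟩
    change 3 - (k : ℕ) % 3 ≠ 0
    omega
  · rintro ⟨i, _, c⟩ ⟨rfl : _ = j, hc : c ≠ 0⟩
    have hc' : (c : ℕ) ≠ 0 := Fin.val_ne_zero_iff.2 hc
    refine ⟨⟨3 * i + (3 - c), by omega⟩, Prod.ext (Fin.ext ?_) (Prod.ext rfl (Fin.ext ?_))⟩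
    · change (3 * (i : ℕ) + (3 - c)) / 3 = i
      omega
    · change 3 - (3 * (i : ℕ) + (3 - c)) % 3 = c
      omega

theorem separatedFrom_rowCycle (j : Fin L) :
    SeparatedFrom (rowCycle j : _ ↪g octCylinder M L) (rowsBelow M L j) := by
  intro k
  obtain ⟨hrow, htype⟩ := (range_rowCycle (M := M) j).subset (Set.mem_range_self k)
  have htype' := Fin.val_ne_zero_iff.2 htype
  have hrow' := congrArg Fin.val hrow
  refine ⟨fun h => h.ne hrow', fun x (hx : (x.2.1 : ℕ) < j) => ?_⟩
  rw [octCylinder_adj, octCylE_iff_val, octCylE_iff_val]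
  omega

variable [LinearOrder (Fin M × Fin L × Fin 4)] {d n : ℕ}

theorem SphereWedgeLike.rowsBelow_succ {j : Fin L}
    (h : SphereWedgeLike (octCylinder M L) (rowsBelow M L j) d n) :
    SphereWedgeLike (octCylinder M L) (rowsBelow M L (j + 1)) (d + M) (2 * n) := by
  let bottom : Set (Fin M × Fin L × Fin 4) := {x | x.2.1 = j ∧ x.2.2 = 0}
  have hsplit : rowsBelow M L (j + 1) \ bottom =
      rowsBelow M L j ∪ Set.range (rowCycle j : _ ↪g octCylinder M L) := by
    ext x
    simp only [rowsBelow, bottom, range_rowCycle, Set.mem_sdiff, Set.mem_union,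
      Set.mem_ofPred_eq, Fin.ext_iff]
    omega
  refine of_fold_set bottom ?_ ?_
  · rintro ⟨i, j', c⟩ ⟨hj : j' = j, hc : c = 0⟩
    rw [hj, hc]
    refine ⟨(i, j, 2), ⟨Nat.lt_succ_self j, by simp [bottom]⟩, by simp [octCylinder, octCylE],
      fun x hx => bottom_adj_of_top_adj (Nat.le_of_lt_succ hx)⟩
  · rw [hsplit]
    exact h.union_range_cycle_three_mul (NeZero.ne M) (separatedFrom_rowCycle j)

variable (M L) in
theorem sphereWedgeLike_rowsBelow {j : ℕ} (hj : j ≤ L) :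
    SphereWedgeLike (octCylinder M L) (rowsBelow M L j) (j * M) (2 ^ j) := by
  induction j with
  | zero =>
    have hempty : rowsBelow M L 0 = ∅ := Set.eq_empty_of_forall_notMem fun x => Nat.not_lt_zero _
    simpa [hempty] using SphereWedgeLike.empty (octCylinder M L)
  | succ j ih =>
    rw [add_mul, one_mul, pow_succ']
    exact SphereWedgeLike.rowsBelow_succ (j := ⟨j, hj⟩) (ih (Nat.le_of_succ_le hj))

end Cylinder

/-- For `M ≥ 2` and `L ≥ 1`, the hard-core fermion model on the
cylindrical octagon-square lattice `O^cyl_{M,L}` has exactly `2^L` zero-energy ground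
states. -/
theorem octagon_square_cylinder_ground_states (M L : ℕ) [NeZero M]
    (hM : 2 ≤ M) (hL : 1 ≤ L)
    [LinearOrder (Fin M × Fin L × Fin 4)] :
    Module.finrank ℂ ↥(LinearMap.ker (hamiltonian (octCylinder M L))) = 2 ^ L := by
  have hwedge := sphereWedgeLike_rowsBelow M L le_rfl
  rw [rowsBelow_self] at hwedge
  exact hwedge.finrank_ker_hamiltonian
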